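/- Let F_81 be the field with 81 elements, F_3 its prime subfield, and N = {(λ, λ^{-1}·I_2) : λ ∈ F_3^×} ≤ F_81^× × GL_2(F_3). Then: (1) the quotient group (F_81^× × GL_2(F_3))/N contains an element of order 80 (namely the class of (α, I_2) for α a generator of F_81^×); (2) the group GL_2(F_3) contains no element of order 16; and consequently (3) the direct product (F_81^×/F_3^×) × GL_2(F_3) contains no element of order 80. -/

import Mathlib

open Matrix
open scoped MatrixGroups

/-- The homomorphism `F_3^× → K^× × GL_2(F_3)`, `λ ↦ (λ, λ⁻¹ • I_2)`, where `K` is the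
field with 81 elements and `F_3 = ZMod 3` its prime field. -/
def psi81 (K : Type*) [Field K] [CharP K 3] :
    (ZMod 3)ˣ →* Kˣ × GL (Fin 2) (ZMod 3) :=
  (Units.map (ZMod.castHom (dvd_refl 3) K).toMonoidHom).prod
    ((Units.map (algebraMap (ZMod 3) (Matrix (Fin 2) (Fin 2) (ZMod 3))).toMonoidHom).comp
      invMonoidHom)

/-- The subgroup `N = {(λ, λ⁻¹ I_2) : λ ∈ F_3^×} ≤ F_81^× × GL_2(F_3)`. -/
def N81 (K : Type*) [Field K] [CharP K 3] : Subgroup (Kˣ × GL (Fin 2) (ZMod 3)) :=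
  (psi81 K).range

instance N81_normal (K : Type*) [Field K] [CharP K 3] : (N81 K).Normal := by
  constructor
  intro n hn g
  obtain ⟨lam, rfl⟩ := hn
  have hcomm : psi81 K lam * g = g * psi81 K lam := by
    apply Prod.ext
    · exact mul_comm _ _
    · apply Units.ext
      show ((psi81 K lam).2 : Matrix (Fin 2) (Fin 2) (ZMod 3)) * (g.2 : Matrix (Fin 2) (Fin 2) (ZMod 3))
        = (g.2 : Matrix (Fin 2) (Fin 2) (ZMod 3)) * ((psi81 K lam).2 : Matrix (Fin 2) (Fin 2) (ZMod 3))
      have : ((psi81 K lam).2 : Matrix (Fin 2) (Fin 2) (ZMod 3))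
          = algebraMap (ZMod 3) (Matrix (Fin 2) (Fin 2) (ZMod 3)) ((lam⁻¹ : (ZMod 3)ˣ) : ZMod 3) := rfl
      rw [this]
      exact Algebra.commutes _ _
  have : g * psi81 K lam * g⁻¹ = psi81 K lam := by
    rw [← hcomm]; group
  rw [this]
  exact ⟨lam, rfl⟩

/-- The image of `F_3^×` in `F_81^×`. -/
def F3units (K : Type*) [Field K] [CharP K 3] : Subgroup Kˣ :=
  (Units.map (ZMod.castHom (dvd_refl 3) K).toMonoidHom).range

theorem aux_pow24 : ∀ a b c d : ZMod 3, a * d - b * c ≠ 0 →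
    (!![a, b; c, d] : Matrix (Fin 2) (Fin 2) (ZMod 3)) ^ 24 = 1 := by
  intro a b c d h
  have e : (!![a, b; c, d] : Matrix (Fin 2) (Fin 2) (ZMod 3)) ^ 24 =
      (((!![a, b; c, d] ^ 2) ^ 2) ^ 2) * ((((!![a, b; c, d] ^ 2) ^ 2) ^ 2) ^ 2) := by
    simp only [← pow_mul, ← pow_add]
  rw [e]
  simp only [pow_two, Matrix.mul_fin_two, Matrix.one_fin_two]
  revert a b c d
  decide +kernel

theorem aux_GL (B : GL (Fin 2) (ZMod 3)) : B ^ 24 = 1 := by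
  apply Units.ext
  have h : (B : Matrix (Fin 2) (Fin 2) (ZMod 3)).det ≠ 0 := by
    have := (Matrix.isUnit_iff_isUnit_det _).1 B.isUnit
    exact this.ne_zero
  rw [Matrix.det_fin_two] at h
  have := aux_pow24 _ _ _ _ h
  rw [← Matrix.eta_fin_two] at this
  simpa using this

theorem aux_F3 (K : Type*) [Field K] [Fintype K] [CharP K 3] (hK : Fintype.card K = 81)
    (u : Kˣ) : u ^ 40 ∈ F3units K := by
  have h80 : (u : K) ^ 80 = 1 := by
    have := FiniteField.pow_card_sub_one_eq_one (u : K) u.ne_zero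
    rwa [hK] at this
  have h2 : ((u : K) ^ 40) ^ 2 = 1 := by rw [← pow_mul]; exact h80
  rcases (mul_self_eq_one_iff.1 ((pow_two _).symm.trans h2)) with h | h
  · have : u ^ 40 = 1 := Units.ext (by simpa using h)
    rw [this]; exact one_mem _
  · refine ⟨-1, Units.ext ?_⟩
    simp [h]

/-- **Element orders distinguishing the two groups (Example 3.3).**
(1) If `α` generates `F_81^×`, then the class of `(α, I_2)` in
`(F_81^× × GL_2(F_3))/N` has order 80; (2) `GL_2(F_3)` has no element of order 16;
consequently (3) `(F_81^×/F_3^×) × GL_2(F_3)` has no element of order 80. -/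
theorem element_orders_distinguish
    (K : Type*) [Field K] [Fintype K] [CharP K 3] (hK : Fintype.card K = 81) :
    (∀ α : Kˣ, (∀ g : Kˣ, g ∈ Subgroup.zpowers α) →
      orderOf (QuotientGroup.mk (s := N81 K) (α, (1 : GL (Fin 2) (ZMod 3)))) = 80) ∧
    (∀ B : GL (Fin 2) (ZMod 3), orderOf B ≠ 16) ∧
    (∀ x : (Kˣ ⧸ F3units K) × GL (Fin 2) (ZMod 3), orderOf x ≠ 80) := by
  refine ⟨fun α hα => ?_, fun B hB => ?_, fun x hx => ?_⟩
  · have hα80 : orderOf α = 80 := by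
      rw [orderOf_eq_card_of_forall_mem_zpowers hα, Nat.card_units, Nat.card_eq_fintype_card, hK]
    rw [← hα80]
    apply Nat.dvd_antisymm
    · apply orderOf_dvd_of_pow_eq_one
      rw [← QuotientGroup.mk_pow, Prod.pow_mk, pow_orderOf_eq_one, one_pow]
      rfl
    · set n := orderOf (QuotientGroup.mk (s := N81 K) (α, (1 : GL (Fin 2) (ZMod 3)))) with hn
      have h : (QuotientGroup.mk (s := N81 K) (α, (1 : GL (Fin 2) (ZMod 3)))) ^ n = 1 :=
        pow_orderOf_eq_one _
      rw [← QuotientGroup.mk_pow, QuotientGroup.eq_one_iff, Prod.pow_mk, one_pow] at h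
      obtain ⟨l, hl⟩ := h
      apply orderOf_dvd_of_pow_eq_one
      have h1 : Units.map (ZMod.castHom (dvd_refl 3) K).toMonoidHom l = α ^ n :=
        congrArg Prod.fst hl
      have h2 : algebraMap (ZMod 3) (Matrix (Fin 2) (Fin 2) (ZMod 3))
          ((l⁻¹ : (ZMod 3)ˣ) : ZMod 3) = 1 :=
        congrArg Units.val (congrArg Prod.snd hl)
      have h3 : ((l⁻¹ : (ZMod 3)ˣ) : ZMod 3) = 1 := by
        have := congrFun (congrFun h2 0) 0
        rw [Matrix.algebraMap_matrix_apply, if_pos rfl, Matrix.one_apply_eq] at this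
        exact this
      have h4 : l = 1 := inv_eq_one.1 (Units.ext h3)
      rw [← h1, h4, map_one]
  · have := orderOf_dvd_of_pow_eq_one (aux_GL B)
    rw [hB] at this
    revert this; decide
  · have h : x ^ 120 = 1 := by
      obtain ⟨a, B⟩ := x
      obtain ⟨u, rfl⟩ := QuotientGroup.mk_surjective a
      have hB : B ^ 120 = 1 := by
        rw [show 120 = 24 * 5 from rfl, pow_mul, aux_GL, one_pow]
      have ha : (QuotientGroup.mk (s := F3units K) u) ^ 120 = 1 := by
        rw [show 120 = 40 * 3 from rfl, pow_mul, ← QuotientGroup.mk_pow,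
          (QuotientGroup.eq_one_iff _).2 (aux_F3 K hK u), one_pow]
      rw [Prod.pow_mk, ha, hB]
      rfl
    have := orderOf_dvd_of_pow_eq_one h
    rw [hx] at this
    revert this; decide
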